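/- Let d ≥ 2 and ℓ, k ≥ 0 be integers, and let f be a spherical harmonic of degree ℓ on S^{d−1} with ∫_{S^{d−1}} |f|² dσ = 1. Then the Zernike basis function ψ(x) = R_{ℓ,k}(‖x‖) f(x/‖x‖) satisfies the uniform bound |ψ(x)| ≤ |C_{ℓ,k}| · √(N_ℓ / σ(S^{d−1})) for every x with 0 < ‖x‖ ≤ 1, where |C_{ℓ,k}| = √(2ℓ+4k+d) · (1/k!) · ∏_{j=1}^{k} (ℓ+k−j+d/2) and N_ℓ is the complex dimension of the space H_ℓ of spherical harmonics of degree ℓ. -/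

import Mathlib

/-!
With `t = r²` and `b = ℓ + d/2`, the factor `R_{ℓ,k}` equals `√(2ℓ+4k+d) r^ℓ y(t)`, where `y` is a
multiple of a Jacobi polynomial and satisfies
`t (1 - t) y'' + (b - (b + 1) t) y' + k (k + b) y = 0`. Following Sonin, the energy
`k (k + b) y² + t (1 - t) y'²` dominates `k (k + b) y²` on `[0, 1]`, with equality at both ends, and
its derivative is `(1 - 2b + 2bt) y'²`. So the energy first decreases and then increases, and `|y|`
is at most the larger of `|y(0)| = (b)_k / k!` and `y(1)`. The latter is the `k`-th finite
difference of the monic polynomial `(x)_k` divided by `k!`, that is `1`, and `(b)_k / k! ≥ 1` since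
`b ≥ 1`.

For an orthonormal basis `Y_i` of `H_ℓ` the function `K = ∑ |Y_i|²` assigns to each point of the
sphere the squared norm of the evaluation functional there. Linear isometries preserve `σ` and
`H_ℓ` and act transitively, so `K` is constant; integrating it gives `K = N_ℓ / σ(S^{d-1})`. That
`σ` is finite follows from homogeneity and compactness, once some open set has finite measure:
the inverse stereographic projection is Lipschitz on a ball.
-/

open MeasureTheory Finset
open scoped ENNReal

noncomputable section

/-- `d`-dimensional Euclidean space. -/
abbrev Euc (d : ℕ) := EuclideanSpace ℝ (Fin d)

/-- The radial Zernike polynomial `R_{ℓ,k}` in dimension `d`. -/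
def zernikeR (d ℓ k : ℕ) (r : ℝ) : ℝ :=
  Real.sqrt (2 * ℓ + 4 * k + d) *
    ∑ s ∈ Finset.range (k + 1),
      (-1 : ℝ) ^ s * (k.choose s : ℝ) * ((k.factorial : ℝ))⁻¹ *
        (∏ j ∈ Finset.Icc 1 k, ((ℓ : ℝ) + 2 * k - s - j + d / 2)) *
        r ^ (ℓ + 2 * (k - s))

/-- `P` is a harmonic homogeneous polynomial of degree `ℓ` in `d` variables. -/
def IsHarmonicHomogeneous (d ℓ : ℕ) (P : MvPolynomial (Fin d) ℂ) : Prop :=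
  P.IsHomogeneous ℓ ∧ (∑ i, MvPolynomial.pderiv i (MvPolynomial.pderiv i P)) = 0

/-- The space `H_ℓ` of spherical harmonics of degree `ℓ`: restrictions to the unit
sphere of harmonic homogeneous polynomials of degree `ℓ`. -/
def sphericalHarmonics (d ℓ : ℕ) :
    Submodule ℂ (Metric.sphere (0 : Euc d) 1 → ℂ) :=
  Submodule.span ℂ
    {f | ∃ P : MvPolynomial (Fin d) ℂ, IsHarmonicHomogeneous d ℓ P ∧
      ∀ x : Metric.sphere (0 : Euc d) 1,
        f x = MvPolynomial.aeval (fun i => (((x : Euc d) i : ℝ) : ℂ)) P}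

/-- `N_ℓ`, the complex dimension of the space `H_ℓ` of spherical harmonics of
degree `ℓ`. -/
def sphericalHarmonicsDim (d ℓ : ℕ) : ℕ := Module.finrank ℂ (sphericalHarmonics d ℓ)

/-! ### Sonin's bound for hypergeometric equations -/

lemma le_max_of_hasDerivAt_affine_mul {F g : ℝ → ℝ} {a b u v : ℝ}
    (hF : ∀ t ∈ Set.Icc u v, HasDerivAt F ((a + b * t) * g t) t)
    (hg : ∀ t ∈ Set.Icc u v, 0 ≤ g t) (hv : 0 ≤ a + b * v) {t : ℝ} (ht : t ∈ Set.Icc u v) :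
    F t ≤ max (F u) (F v) := by
  have hcont : ContinuousOn F (Set.Icc u v) := fun s hs => (hF s hs).continuousAt.continuousWithinAt
  rcases le_or_gt 0 (a + b * t) with hsign | hsign
  · have hsub : Set.Icc t v ⊆ Set.Icc u v := Set.Icc_subset_Icc_left ht.1
    have hmono : MonotoneOn F (Set.Icc t v) := by
      refine monotoneOn_of_hasDerivWithinAt_nonneg (convex_Icc t v) (hcont.mono hsub)
        (fun s hs => (hF s (hsub (interior_subset hs))).hasDerivWithinAt) fun s hs => ?_
      have hs' := interior_subset hs
      refine mul_nonneg ?_ (hg s (hsub hs'))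
      rcases le_total 0 b with hb | hb <;> nlinarith [hs'.1, hs'.2]
    exact le_max_of_le_right
      (hmono (Set.left_mem_Icc.2 ht.2) (Set.right_mem_Icc.2 ht.2) ht.2)
  · have hsub : Set.Icc u t ⊆ Set.Icc u v := Set.Icc_subset_Icc_right ht.2
    have hb : 0 ≤ b := by
      by_contra! hb
      nlinarith [ht.2]
    have hanti : AntitoneOn F (Set.Icc u t) := by
      refine antitoneOn_of_hasDerivWithinAt_nonpos (convex_Icc u t) (hcont.mono hsub)
        (fun s hs => (hF s (hsub (interior_subset hs))).hasDerivWithinAt) fun s hs => ?_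
      have hs' := interior_subset hs
      refine mul_nonpos_of_nonpos_of_nonneg ?_ (hg s (hsub hs'))
      linarith [mul_le_mul_of_nonneg_left hs'.2 hb]
    exact le_max_of_le_left
      (hanti (Set.left_mem_Icc.2 ht.1) (Set.right_mem_Icc.2 ht.1) ht.1)

/-- The energy `λ y² + t (1 - t) y'²` that Sonin's method attaches to a solution `y` of
`t (1 - t) y'' + (β - γ t) y' + λ y = 0`; the derivative `y'` is passed as a separate function. -/
def soninEnergy (lam : ℝ) (y y' : ℝ → ℝ) (t : ℝ) : ℝ :=
  lam * y t ^ 2 + t * (1 - t) * y' t ^ 2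

lemma hasDerivAt_soninEnergy {β γ lam t : ℝ} {y y' y'' : ℝ → ℝ}
    (hy : HasDerivAt y (y' t) t) (hy' : HasDerivAt y' (y'' t) t)
    (hode : t * (1 - t) * y'' t + (β - γ * t) * y' t + lam * y t = 0) :
    HasDerivAt (soninEnergy lam y y') ((1 - 2 * β + 2 * (γ - 1) * t) * y' t ^ 2) t := by
  have hweight := (hasDerivAt_id t).mul ((hasDerivAt_id t).const_sub 1)
  refine (((hy.pow 2).const_mul lam).add (hweight.mul (hy'.pow 2))).congr_deriv ?_
  simp only [id_eq, Pi.mul_apply, Pi.pow_apply]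
  push_cast
  linear_combination 2 * y' t * hode

lemma sq_le_max_sq_of_hypergeometric_ode {β γ lam : ℝ} {y y' y'' : ℝ → ℝ}
    (hlam : 0 < lam) (hβγ : 1 / 2 ≤ γ - β)
    (hy : ∀ t ∈ Set.Icc (0 : ℝ) 1, HasDerivAt y (y' t) t)
    (hy' : ∀ t ∈ Set.Icc (0 : ℝ) 1, HasDerivAt y' (y'' t) t)
    (hode : ∀ t ∈ Set.Icc (0 : ℝ) 1, t * (1 - t) * y'' t + (β - γ * t) * y' t + lam * y t = 0)
    {t : ℝ} (ht : t ∈ Set.Icc (0 : ℝ) 1) :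
    y t ^ 2 ≤ max (y 0 ^ 2) (y 1 ^ 2) := by
  refine le_of_mul_le_mul_left ?_ hlam
  calc lam * y t ^ 2 ≤ soninEnergy lam y y' t :=
        le_add_of_nonneg_right (mul_nonneg (mul_nonneg ht.1 (sub_nonneg.2 ht.2)) (sq_nonneg _))
    _ ≤ max (soninEnergy lam y y' 0) (soninEnergy lam y y' 1) :=
        le_max_of_hasDerivAt_affine_mul
          (fun s hs => hasDerivAt_soninEnergy (hy s hs) (hy' s hs) (hode s hs))
          (fun s _ => sq_nonneg (y' s)) (by linarith) ht
    _ = lam * max (y 0 ^ 2) (y 1 ^ 2) := by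
        simp [soninEnergy, mul_max_of_nonneg _ _ hlam.le]

/-! ### The radial factor -/

/-- The coefficient of `t ^ m` in the polynomial `y` for which
`R_{ℓ,k}(r) = √(2ℓ+4k+d) · r ^ ℓ · y(r²)`, where `b = ℓ + d/2`. Up to the sign `(-1) ^ k`, `y` is
the Jacobi polynomial `binom(k+b-1, k) · ₂F₁(-k, k+b; b; t)`. -/
def radialCoeff (b : ℝ) (k m : ℕ) : ℝ :=
  (-1 : ℝ) ^ (k + m) * k.choose m * (k.factorial : ℝ)⁻¹ * (ascPochhammer ℝ k).eval (b + m)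

/-- The polynomial `y` in `R_{ℓ,k}(r) = √(2ℓ+4k+d) · r ^ ℓ · y(r²)`; Sonin's bound
applies to it. -/
def radialPoly (b : ℝ) (k : ℕ) : Polynomial ℝ :=
  ∑ m ∈ range (k + 1), Polynomial.monomial m (radialCoeff b k m)

lemma radialPoly_coeff (b : ℝ) (k m : ℕ) : (radialPoly b k).coeff m = radialCoeff b k m := by
  simp only [radialPoly, Polynomial.finsetSum_coeff, Polynomial.coeff_monomial, sum_ite_eq',
    mem_range, Order.lt_add_one_iff, ite_eq_left_iff, not_le]
  intro hkm
  simp [radialCoeff, Nat.choose_eq_zero_of_lt hkm]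

lemma ascPochhammer_eval_add_one_mul {S : Type*} [CommSemiring S] (k : ℕ) (x : S) :
    (ascPochhammer S k).eval (x + 1) * x = (ascPochhammer S k).eval x * (x + k) := by
  rw [← ascPochhammer_succ_eval, ascPochhammer_succ_left]
  simp [mul_comm]

lemma choose_succ_mul_cast {R : Type*} [Ring R] (k m : ℕ) :
    (k.choose (m + 1) : R) * (m + 1) = k.choose m * ((k : R) - m) := by
  rcases le_or_gt m k with h | h
  · rw [← Nat.cast_sub h]
    exact_mod_cast congrArg (Nat.cast : ℕ → R) (Nat.choose_succ_right_eq k m)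
  · simp [Nat.choose_eq_zero_of_lt h, Nat.choose_eq_zero_of_lt (Nat.lt_succ_of_lt h)]

lemma radialCoeff_succ (b : ℝ) (k m : ℕ) :
    radialCoeff b k (m + 1) * ((m + 1) * (m + b)) =
      radialCoeff b k m * ((m - k) * (m + k + b)) := by
  have hpoch := ascPochhammer_eval_add_one_mul k (b + m)
  simp only [radialCoeff, Nat.cast_succ, ← add_assoc]
  linear_combination (-(-1 : ℝ) ^ (k + m) * (k.factorial : ℝ)⁻¹) *
    (choose_succ_mul_cast (R := ℝ) k m * ((ascPochhammer ℝ k).eval (b + m + 1) * (b + m)) +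
      k.choose m * (k - m) * hpoch)

open Polynomial in
-- Comparing the coefficients of `X ^ m` on both sides gives the recurrence `radialCoeff_succ`.
lemma radialPoly_ode (b : ℝ) (k : ℕ) :
    X * (1 - X) * derivative (derivative (radialPoly b k)) +
      (C b - C (b + 1) * X) * derivative (radialPoly b k) +
      C (k * (k + b)) * radialPoly b k = 0 := by
  ext m
  have hrec := radialCoeff_succ b k m
  simp only [mul_sub, sub_mul, mul_one, mul_assoc]
  rcases m with _ | _ | m <;>
  · simp only [coeff_add, coeff_sub, coeff_X_mul, coeff_X_mul_zero, coeff_C_mul, coeff_derivative,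
      coeff_zero, radialPoly_coeff, zero_add, Nat.cast_add, Nat.cast_one, Nat.cast_zero] at hrec ⊢
    linear_combination hrec

lemma radialPoly_eval_one (b : ℝ) (k : ℕ) : (radialPoly b k).eval 1 = 1 := by
  have hfact : (k.factorial : ℝ) ≠ 0 := by positivity
  have hdiff := congrFun (Polynomial.fwdDiff_iter_degree_eq_factorial (ascPochhammer ℝ k)) b
  rw [ascPochhammer_natDegree, (monic_ascPochhammer ℝ k).leadingCoeff,
    fwdDiff_iter_eq_sum_shift] at hdiff
  have hterm : ∀ m ∈ range (k + 1), radialCoeff b k m * k.factorial =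
      ((-1 : ℤ) ^ (k - m) * k.choose m) • (ascPochhammer ℝ k).eval (b + m • 1) := by
    intro m hm
    obtain ⟨j, rfl⟩ := Nat.exists_eq_add_of_le (mem_range_succ_iff.1 hm)
    have hsign : (-1 : ℝ) ^ (m + j + m) = (-1) ^ j := by
      rw [show m + j + m = j + 2 * m by ring, pow_add, pow_mul]
      simp
    simp only [radialCoeff, hsign, Nat.add_sub_cancel_left, zsmul_eq_mul, nsmul_eq_mul, mul_one]
    push_cast
    field_simp
  have hsum : (∑ m ∈ range (k + 1), radialCoeff b k m) * k.factorial = k.factorial := by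
    rw [sum_mul, sum_congr rfl hterm, hdiff]
    simp
  simpa [radialPoly, Polynomial.eval_finsetSum, hfact] using hsum

lemma radialPoly_eval_zero_sq (b : ℝ) (k : ℕ) :
    (radialPoly b k).eval 0 ^ 2 = ((k.factorial : ℝ)⁻¹ * (ascPochhammer ℝ k).eval b) ^ 2 := by
  rw [← Polynomial.coeff_zero_eq_eval_zero, radialPoly_coeff]
  simp [radialCoeff, mul_pow, ← pow_mul, mul_comm k 2]

lemma ascPochhammer_eval_mono {S : Type*} [Semiring S] [PartialOrder S] [IsStrictOrderedRing S]
    {x y : S} (hx : 0 < x) (hxy : x ≤ y) (k : ℕ) :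
    (ascPochhammer S k).eval x ≤ (ascPochhammer S k).eval y := by
  induction k with
  | zero => simp
  | succ k ih =>
    rw [ascPochhammer_succ_eval, ascPochhammer_succ_eval]
    exact mul_le_mul ih (by gcongr) (by positivity) (ascPochhammer_pos k y (hx.trans_le hxy)).le

lemma one_le_inv_factorial_mul_ascPochhammer_eval {b : ℝ} (hb : 1 ≤ b) (k : ℕ) :
    1 ≤ (k.factorial : ℝ)⁻¹ * (ascPochhammer ℝ k).eval b := by
  rw [inv_mul_eq_div, le_div_iff₀ (by positivity), one_mul, ← ascPochhammer_eval_one]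
  exact ascPochhammer_eval_mono one_pos hb k

lemma abs_radialPoly_eval_le {b : ℝ} (hb : 1 ≤ b) (k : ℕ) {t : ℝ} (ht : t ∈ Set.Icc (0 : ℝ) 1) :
    |(radialPoly b k).eval t| ≤ (k.factorial : ℝ)⁻¹ * (ascPochhammer ℝ k).eval b := by
  have hbound := one_le_inv_factorial_mul_ascPochhammer_eval hb k
  rcases k.eq_zero_or_pos with rfl | hk
  · simp [radialPoly, radialCoeff]
  have hode (s : ℝ) := congrArg (Polynomial.eval s) (radialPoly_ode b k)
  simp only [Polynomial.eval_add, Polynomial.eval_mul, Polynomial.eval_sub, Polynomial.eval_X,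
    Polynomial.eval_C, Polynomial.eval_one, Polynomial.eval_zero] at hode
  have hsonin := sq_le_max_sq_of_hypergeometric_ode (lam := k * (k + b)) (by positivity)
    (by linarith) (fun s _ => (radialPoly b k).hasDerivAt s)
    (fun s _ => (radialPoly b k).derivative.hasDerivAt s) (fun s _ => hode s) ht
  rw [radialPoly_eval_zero_sq, radialPoly_eval_one,
    max_eq_left (pow_le_pow_left₀ zero_le_one hbound 2)] at hsonin
  exact abs_le_of_sq_le_sq hsonin (zero_le_one.trans hbound)

lemma prod_Icc_sub_eq_ascPochhammer_eval {R : Type*} [CommRing R] (a : R) (k : ℕ) :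
    ∏ j ∈ Icc 1 k, (a - j) = (ascPochhammer R k).eval (a - k) := by
  have hshift : ∏ j ∈ Icc 1 k, (a - j) = ∏ j ∈ range k, (a - 1 - j) := by
    rw [range_eq_Ico, ← Ico_add_one_right_eq_Icc, ← prod_Ico_add' (fun j : ℕ => a - (j : R)) 0 k 1]
    simp [sub_sub, add_comm]
  rw [hshift, ← descPochhammer_eval_eq_prod_range, descPochhammer_eval_eq_ascPochhammer]
  ring_nf

lemma zernikeR_eq (d ℓ k : ℕ) (r : ℝ) :
    zernikeR d ℓ k r = Real.sqrt (2 * ℓ + 4 * k + d) *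
      (r ^ ℓ * (radialPoly (ℓ + d / 2) k).eval (r ^ 2)) := by
  rw [zernikeR, radialPoly, Polynomial.eval_finsetSum]
  congr 1
  rw [mul_sum, ← sum_range_reflect]
  refine sum_congr rfl fun m hm => ?_
  obtain ⟨j, rfl⟩ := Nat.exists_eq_add_of_le (mem_range_succ_iff.1 hm)
  have hsign : (-1 : ℝ) ^ (m + j + m) = (-1) ^ j := by
    rw [show m + j + m = j + 2 * m by ring, pow_add, pow_mul]
    simp
  have hprod : ∏ i ∈ Icc 1 (m + j), ((ℓ : ℝ) + 2 * (m + j : ℕ) - j - i + d / 2) =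
      (ascPochhammer ℝ (m + j)).eval (ℓ + d / 2 + m : ℝ) := by
    simp_rw [sub_add_eq_add_sub _ _ ((d : ℝ) / 2), prod_Icc_sub_eq_ascPochhammer_eval]
    push_cast
    ring_nf
  rw [show m + j + 1 - 1 - m = j by omega, Polynomial.eval_monomial, radialCoeff, hsign, hprod,
    Nat.choose_symm_add, pow_add, pow_mul, Nat.add_sub_cancel]
  ring

lemma abs_zernikeR_le {d ℓ : ℕ} (hdℓ : 2 ≤ 2 * ℓ + d) (k : ℕ) {r : ℝ} (hr : r ∈ Set.Icc 0 1) :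
    |zernikeR d ℓ k r| ≤ Real.sqrt (2 * ℓ + 4 * k + d) * (k.factorial : ℝ)⁻¹ *
      ∏ j ∈ Icc 1 k, ((ℓ : ℝ) + k - j + d / 2) := by
  have hb : 1 ≤ (ℓ : ℝ) + d / 2 := by
    have : (2 : ℝ) ≤ 2 * ℓ + d := by exact_mod_cast hdℓ
    linarith
  have hprod : ∏ j ∈ Icc 1 k, ((ℓ : ℝ) + k - j + d / 2) =
      (ascPochhammer ℝ k).eval (ℓ + d / 2 : ℝ) := by
    simp_rw [sub_add_eq_add_sub _ _ ((d : ℝ) / 2), prod_Icc_sub_eq_ascPochhammer_eval]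
    ring_nf
  have hr2 : r ^ 2 ∈ Set.Icc (0 : ℝ) 1 := ⟨sq_nonneg r, pow_le_one₀ hr.1 hr.2⟩
  rw [hprod, zernikeR_eq, abs_mul, abs_of_nonneg (Real.sqrt_nonneg _), mul_assoc, abs_mul,
    abs_of_nonneg (pow_nonneg hr.1 ℓ)]
  refine mul_le_mul_of_nonneg_left ?_ (Real.sqrt_nonneg _)
  calc r ^ ℓ * |(radialPoly (ℓ + d / 2) k).eval (r ^ 2)|
      ≤ |(radialPoly (ℓ + d / 2) k).eval (r ^ 2)| :=
        mul_le_of_le_one_left (abs_nonneg _) (pow_le_one₀ hr.1 hr.2)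
    _ ≤ (k.factorial : ℝ)⁻¹ * (ascPochhammer ℝ k).eval (ℓ + d / 2 : ℝ) :=
        abs_radialPoly_eval_le hb k hr2

/-! ### Reproducing kernels on compact homogeneous spaces -/

lemma exists_orthonormal_map_span_eq {𝕜 E H : Type*} [RCLike 𝕜] [AddCommGroup E] [Module 𝕜 E]
    [NormedAddCommGroup H] [InnerProductSpace 𝕜 H] {T : E →ₗ[𝕜] H} (hT : Function.Injective T)
    (V : Submodule 𝕜 E) [FiniteDimensional 𝕜 V] :
    ∃ Y : Fin (Module.finrank 𝕜 V) → E,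
      Orthonormal 𝕜 (T ∘ Y) ∧ Submodule.span 𝕜 (Set.range Y) = V := by
  let e : V ≃ₗ[𝕜] V.map T := Submodule.equivMapOfInjective T hT V
  have : FiniteDimensional 𝕜 (V.map T) := e.finiteDimensional
  let b := (stdOrthonormalBasis 𝕜 (V.map T)).reindex (finCongr e.finrank_eq.symm)
  have hTb (i) : T (e.symm (b i)) = b i := by
    rw [← Submodule.coe_equivMapOfInjective_apply T hT V]
    exact congrArg Subtype.val (e.apply_symm_apply (b i))
  refine ⟨fun i => e.symm (b i), ?_, ?_⟩
  · rw [show T ∘ (fun i => (e.symm (b i) : E)) = fun i => (b i : H) from funext hTb]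
    exact b.orthonormal.comp_linearIsometry (V.map T).subtypeₗᵢ
  · have hspan := (b.toBasis.map e.symm).span_eq
    have := congrArg (Submodule.map V.subtype) hspan
    rw [Submodule.map_span, ← Set.range_comp, Submodule.map_subtype_top] at this
    convert this using 3
    ext i
    simp

section ReproducingKernel

variable {𝕜 X ι : Type*} [RCLike 𝕜] [TopologicalSpace X] [Fintype ι]

/-- The diagonal `K(x, x) = ∑ |Y_i(x)|²` of the reproducing kernel of the space of functions with
`L²`-orthonormal basis `Y`. -/
def kernelDiag (Y : ι → C(X, 𝕜)) (x : X) : ℝ :=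
  ∑ i, ‖Y i x‖ ^ 2

lemma kernelDiag_nonneg (Y : ι → C(X, 𝕜)) (x : X) : 0 ≤ kernelDiag Y x :=
  sum_nonneg fun _ _ => sq_nonneg _

variable [CompactSpace X] [MeasurableSpace X] [BorelSpace X] {μ : Measure X} [IsFiniteMeasure μ]

lemma norm_sq_toLp (f : C(X, 𝕜)) : ‖ContinuousMap.toLp 2 μ 𝕜 f‖ ^ 2 = ∫ x, ‖f x‖ ^ 2 ∂μ := by
  have h := ContinuousMap.inner_toLp (𝕜 := 𝕜) μ f f
  simp only [inner_self_eq_norm_sq_to_K, RCLike.mul_conj] at h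
  have h' : ∫ x, ((‖f x‖ : 𝕜)) ^ 2 ∂μ = ((∫ x, ‖f x‖ ^ 2 ∂μ : ℝ) : 𝕜) := by
    rw [← integral_ofReal]
    simp
  rw [h'] at h
  exact_mod_cast h

variable {Y : ι → C(X, 𝕜)}

lemma norm_sq_toLp_sum_smul (hY : Orthonormal 𝕜 (ContinuousMap.toLp 2 μ 𝕜 ∘ Y)) (c : ι → 𝕜) :
    ‖ContinuousMap.toLp 2 μ 𝕜 (∑ i, c i • Y i)‖ ^ 2 = ∑ i, ‖c i‖ ^ 2 := by
  have h := hY.inner_sum c c univ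
  simp only [Function.comp_apply, ← map_smul, ← map_sum, inner_self_eq_norm_sq_to_K,
    RCLike.conj_mul] at h
  exact_mod_cast h

lemma norm_sq_apply_le_kernelDiag_mul (hY : Orthonormal 𝕜 (ContinuousMap.toLp 2 μ 𝕜 ∘ Y))
    {f : C(X, 𝕜)} (hf : f ∈ Submodule.span 𝕜 (Set.range Y)) (x : X) :
    ‖f x‖ ^ 2 ≤ kernelDiag Y x * ∫ x, ‖f x‖ ^ 2 ∂μ := by
  obtain ⟨c, rfl⟩ := (Submodule.mem_span_range_iff_exists_fun 𝕜).1 hf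
  rw [← norm_sq_toLp, norm_sq_toLp_sum_smul hY, mul_comm]
  calc ‖(∑ i, c i • Y i) x‖ ^ 2 ≤ (∑ i, ‖c i‖ * ‖Y i x‖) ^ 2 := by
        gcongr
        simpa [ContinuousMap.sum_apply] using norm_sum_le univ fun i => c i * Y i x
    _ ≤ (∑ i, ‖c i‖ ^ 2) * kernelDiag Y x := sum_mul_sq_le_sq_mul_sq _ _ _

-- The extremal function is the kernel `K(·, x) = ∑ conj (Y_i(x)) Y_i`.
lemma exists_mem_span_apply_eq_kernelDiag
    (hY : Orthonormal 𝕜 (ContinuousMap.toLp 2 μ 𝕜 ∘ Y)) (x : X) :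
    ∃ f ∈ Submodule.span 𝕜 (Set.range Y),
      f x = kernelDiag Y x ∧ ∫ z, ‖f z‖ ^ 2 ∂μ = kernelDiag Y x := by
  refine ⟨∑ i, starRingEnd 𝕜 (Y i x) • Y i, ?_, ?_, ?_⟩
  · exact (Submodule.mem_span_range_iff_exists_fun 𝕜).2 ⟨_, rfl⟩
  · simp [kernelDiag, ContinuousMap.sum_apply, RCLike.conj_mul]
  · rw [← norm_sq_toLp, norm_sq_toLp_sum_smul hY]
    simp [kernelDiag]

lemma integral_kernelDiag (hY : Orthonormal 𝕜 (ContinuousMap.toLp 2 μ 𝕜 ∘ Y)) :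
    ∫ x, kernelDiag Y x ∂μ = Fintype.card ι := by
  have hint (i) : Integrable (fun x => ‖Y i x‖ ^ 2) μ :=
    (show Continuous fun x => ‖Y i x‖ ^ 2 by fun_prop).integrable_of_hasCompactSupport
      (HasCompactSupport.of_compactSpace _)
  have hone (i) : ∫ x, ‖Y i x‖ ^ 2 ∂μ = 1 := by
    rw [← norm_sq_toLp, ← Function.comp_apply (f := ContinuousMap.toLp 2 μ 𝕜), hY.1 i, one_pow]
  simp only [kernelDiag]
  rw [integral_finsetSum _ fun i _ => hint i]
  simp [hone]

variable {G : Type*} [Group G] [MulAction G X] [ContinuousConstSMul G X]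

lemma kernelDiag_smul_le [SMulInvariantMeasure G X μ]
    (hY : Orthonormal 𝕜 (ContinuousMap.toLp 2 μ 𝕜 ∘ Y)) (g : G)
    (hg : ∀ f ∈ Submodule.span 𝕜 (Set.range Y),
      f.comp ⟨(g • ·), continuous_const_smul g⟩ ∈ Submodule.span 𝕜 (Set.range Y)) (x : X) :
    kernelDiag Y (g • x) ≤ kernelDiag Y x := by
  obtain ⟨f, hf, hfx, hfnorm⟩ := exists_mem_span_apply_eq_kernelDiag hY (g • x)
  have hbound := norm_sq_apply_le_kernelDiag_mul hY (hg f hf) x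
  have htranslate : ∫ z, ‖f (g • z)‖ ^ 2 ∂μ = kernelDiag Y (g • x) := by
    rw [← hfnorm]
    exact integral_smul_eq_self (fun z => ‖f z‖ ^ 2)
  simp only [ContinuousMap.comp_apply, ContinuousMap.coe_mk, hfx,
    htranslate, RCLike.norm_ofReal, sq_abs] at hbound
  rcases (kernelDiag_nonneg Y (g • x)).eq_or_lt with hzero | hpos
  · exact hzero ▸ kernelDiag_nonneg Y x
  · exact le_of_mul_le_mul_right (sq (kernelDiag Y (g • x)) ▸ hbound) hpos

lemma kernelDiag_mul_measure_univ [SMulInvariantMeasure G X μ] [MulAction.IsPretransitive G X]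
    (hY : Orthonormal 𝕜 (ContinuousMap.toLp 2 μ 𝕜 ∘ Y))
    (hG : ∀ g : G, ∀ f ∈ Submodule.span 𝕜 (Set.range Y),
      f.comp ⟨(g • ·), continuous_const_smul g⟩ ∈ Submodule.span 𝕜 (Set.range Y)) (x : X) :
    kernelDiag Y x * μ.real Set.univ = Fintype.card ι := by
  have hle (y z : X) : kernelDiag Y y ≤ kernelDiag Y z := by
    obtain ⟨g, rfl⟩ := MulAction.exists_smul_eq G z y
    exact kernelDiag_smul_le hY g (hG g) z
  have hconst (y : X) : kernelDiag Y y = kernelDiag Y x := le_antisymm (hle y x) (hle x y)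
  rw [← integral_kernelDiag hY]
  simp [hconst, mul_comm]

lemma norm_sq_apply_mul_measure_univ_le [SMulInvariantMeasure G X μ]
    [MulAction.IsPretransitive G X] {V : Submodule 𝕜 C(X, 𝕜)} [FiniteDimensional 𝕜 V]
    (hV : ∀ g : G, ∀ f ∈ V, f.comp ⟨(g • ·), continuous_const_smul g⟩ ∈ V)
    {f : C(X, 𝕜)} (hf : f ∈ V) (x : X) :
    ‖f x‖ ^ 2 * μ.real Set.univ ≤ Module.finrank 𝕜 V * ∫ x, ‖f x‖ ^ 2 ∂μ := by
  rcases eq_or_ne μ 0 with rfl | hμ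
  · simp
  have : μ.IsOpenPosMeasure := ⟨fun U hU hne =>
    (measure_isOpen_pos_of_smulInvariant_of_compact_ne_zero G isCompact_univ
      (Measure.measure_univ_ne_zero.2 hμ) hU hne).ne'⟩
  obtain ⟨Y, hY, hYV⟩ := exists_orthonormal_map_span_eq
    (T := (ContinuousMap.toLp 2 μ 𝕜 : C(X, 𝕜) →L[𝕜] Lp 𝕜 2 μ).toLinearMap)
    (ContinuousMap.toLp_injective μ) V
  have hbound := norm_sq_apply_le_kernelDiag_mul hY (hYV.symm ▸ hf) x
  have hkernel := kernelDiag_mul_measure_univ (G := G) hY (hYV.symm ▸ hV) x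
  rw [Fintype.card_fin] at hkernel
  calc ‖f x‖ ^ 2 * μ.real Set.univ
      ≤ kernelDiag Y x * (∫ x, ‖f x‖ ^ 2 ∂μ) * μ.real Set.univ := by gcongr
    _ = Module.finrank 𝕜 V * ∫ x, ‖f x‖ ^ 2 ∂μ := by rw [mul_right_comm, hkernel]

end ReproducingKernel

/-! ### The surface measure of the unit sphere -/

section Sphere

variable {E : Type*} [NormedAddCommGroup E] [InnerProductSpace ℝ E] {r : ℝ}

instance : MulAction (E ≃ₗᵢ[ℝ] E) (Metric.sphere (0 : E) r) where
  smul A x := ⟨A x, by simp⟩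
  one_smul _ := rfl
  mul_smul _ _ _ := rfl

lemma coe_linearIsometryEquiv_smul (A : E ≃ₗᵢ[ℝ] E) (x : Metric.sphere (0 : E) r) :
    ((A • x : Metric.sphere (0 : E) r) : E) = A x :=
  rfl

instance : IsIsometricSMul (E ≃ₗᵢ[ℝ] E) (Metric.sphere (0 : E) r) :=
  ⟨fun A x y => A.isometry x y⟩

instance : MulAction.IsPretransitive (E ≃ₗᵢ[ℝ] E) (Metric.sphere (0 : E) r) :=
  ⟨fun x y => ⟨(ℝ ∙ (x - y : E))ᗮ.reflection, Subtype.ext (Submodule.reflection_sub (by simp))⟩⟩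

lemma exists_lipschitzOnWith_stereographic_symm [FiniteDimensional ℝ E] {v : E} (hv : ‖v‖ = 1) :
    ∃ K, LipschitzOnWith K (stereographic hv).symm (Metric.closedBall 0 1) := by
  have hsmooth : ContDiff ℝ 1 fun w : (ℝ ∙ v)ᗮ => stereoInvFunAux v w :=
    contDiff_stereoInvFunAux.comp (ℝ ∙ v)ᗮ.subtypeL.contDiff
  exact hsmooth.contDiffOn.exists_lipschitzOnWith one_ne_zero (convex_closedBall 0 1)
    (isCompact_closedBall 0 1)

variable [MeasurableSpace E] [BorelSpace E]

instance isFiniteMeasure_hausdorffMeasure_sphere [FiniteDimensional ℝ E] :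
    IsFiniteMeasure (μH[(Module.finrank ℝ E : ℝ) - 1] : Measure (Metric.sphere (0 : E) 1)) := by
  rcases isEmpty_or_nonempty (Metric.sphere (0 : E) 1) with hempty | ⟨⟨v, hv⟩⟩
  · infer_instance
  rw [mem_sphere_zero_iff_norm] at hv
  have hdim : (Module.finrank ℝ E : ℝ) - 1 = Module.finrank ℝ (ℝ ∙ v)ᗮ := by
    rw [← (ℝ ∙ v).finrank_add_finrank_orthogonal,
      finrank_span_singleton (ne_zero_of_norm_ne_zero (by simp [hv]))]
    push_cast
    ring
  let U : Set (Metric.sphere (0 : E) 1) := (stereographic hv).symm '' Metric.ball 0 1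
  have hopen : IsOpen U := (isOpenEmbedding_stereographic_symm hv).isOpenMap _ Metric.isOpen_ball
  have hnonempty : U.Nonempty := (Metric.nonempty_ball.2 one_pos).image _
  obtain ⟨K, hK⟩ := exists_lipschitzOnWith_stereographic_symm hv
  have hfinite : μH[(Module.finrank ℝ E : ℝ) - 1] U ≠ ⊤ := by
    rw [hdim]
    refine ((hK.mono Metric.ball_subset_closedBall).hausdorffMeasure_image_le
      (Nat.cast_nonneg _)).trans_lt ?_ |>.ne
    exact ENNReal.mul_lt_top (ENNReal.rpow_lt_top_of_nonneg (Nat.cast_nonneg _)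
      ENNReal.coe_ne_top) measure_ball_lt_top
  have := isLocallyFiniteMeasure_of_smulInvariant (E ≃ₗᵢ[ℝ] E) hopen hnonempty hfinite
  infer_instance

end Sphere

lemma integral_subtype_hausdorffMeasure {X F : Type*} [EMetricSpace X] [MeasurableSpace X]
    [BorelSpace X] [NormedAddCommGroup F] [NormedSpace ℝ F] {s : Set X} (hs : MeasurableSet s)
    {p : ℝ} (hp : 0 ≤ p) (f : X → F) :
    ∫ x : s, f x ∂μH[p] = ∫ x in s, f x ∂μH[p] := by
  rw [← (MeasurableEmbedding.subtype_coe hs).integral_map,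
    isometry_subtype_coe.map_hausdorffMeasure (Or.inl hp), Subtype.range_coe]

lemma hausdorffMeasure_subtype_univ {X : Type*} [EMetricSpace X] [MeasurableSpace X]
    [BorelSpace X] (s : Set X) {p : ℝ} (hp : 0 ≤ p) :
    μH[p] (Set.univ : Set s) = μH[p] s := by
  rw [← isometry_subtype_coe.hausdorffMeasure_image (Or.inl hp), Set.image_univ,
    Subtype.range_coe]

/-! ### Rotation invariance of spherical harmonics -/

section Laplacian

open MvPolynomial

variable {σ τ R : Type*} [CommSemiring R]

lemma pderiv_bind₁ [Fintype σ] (g : σ → MvPolynomial τ R) (j : τ) (P : MvPolynomial σ R) :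
    pderiv j (bind₁ g P) = ∑ i, bind₁ g (pderiv i P) * pderiv j (g i) := by
  classical
  induction P using MvPolynomial.induction_on with
  | C a => simp
  | add P Q hP hQ => simp only [map_add, hP, hQ, add_mul, sum_add_distrib]
  | mul_X P n hP =>
    have hsingle : ∑ i, bind₁ g P * bind₁ g (pderiv i (X n)) * pderiv j (g i) =
        bind₁ g P * pderiv j (g n) := by
      rw [sum_eq_single n (fun i _ hi => by simp [pderiv_X_of_ne hi.symm]) (by simp)]
      simp
    simp only [map_mul, bind₁_X_right, Derivation.leibniz, hP, smul_eq_mul, map_add, add_mul,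
      sum_add_distrib, hsingle, mul_sum]
    congr 1
    exact sum_congr rfl fun i _ => by ring

variable (σ R) in
/-- The Laplacian `∑ ∂²/∂X_i²` on polynomials, as a linear map so that its kernel is a submodule. -/
def polyLaplacian [Fintype σ] : MvPolynomial σ R →ₗ[R] MvPolynomial σ R :=
  ∑ i, (pderiv i).toLinearMap ∘ₗ (pderiv i).toLinearMap

lemma polyLaplacian_apply [Fintype σ] (P : MvPolynomial σ R) :
    polyLaplacian σ R P = ∑ i, pderiv i (pderiv i P) := by
  simp [polyLaplacian]

lemma pderiv_toMvPolynomial [Fintype τ] (M : Matrix σ τ R) (i : σ) (j : τ) :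
    pderiv j (M.toMvPolynomial i) = C (M i j) := by
  classical
  rw [Matrix.toMvPolynomial, map_sum, sum_eq_single j _ (by simp)]
  · simp [pderiv_monomial]
  · intro l _ hl
    simp [pderiv_monomial, hl]

lemma polyLaplacian_bind₁_toMvPolynomial [Fintype σ] [DecidableEq σ] [Fintype τ]
    {M : Matrix σ τ R} (hM : M * M.transpose = 1) (P : MvPolynomial σ R) :
    polyLaplacian τ R (bind₁ M.toMvPolynomial P) =
      bind₁ M.toMvPolynomial (polyLaplacian σ R P) := by
  have hsecond (j : τ) : pderiv j (pderiv j (bind₁ M.toMvPolynomial P)) =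
      ∑ i, ∑ l, bind₁ M.toMvPolynomial (pderiv l (pderiv i P)) * C (M l j * M i j) := by
    simp only [pderiv_bind₁, pderiv_toMvPolynomial, map_sum, Derivation.leibniz, pderiv_C,
      smul_eq_mul, mul_zero, zero_add, mul_sum, C_mul]
    exact sum_congr rfl fun i _ => sum_congr rfl fun l _ => by ring
  have hrows (l i : σ) : ∑ j, M l j * M i j = if l = i then 1 else 0 := by
    simpa [Matrix.mul_apply, Matrix.one_apply] using congrFun (congrFun hM l) i
  calc polyLaplacian τ R (bind₁ M.toMvPolynomial P)
      = ∑ i, ∑ l, bind₁ M.toMvPolynomial (pderiv l (pderiv i P)) * C (∑ j, M l j * M i j) := by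
        simp only [polyLaplacian_apply, hsecond, map_sum, mul_sum]
        rw [sum_comm]
        exact sum_congr rfl fun i _ => sum_comm
    _ = bind₁ M.toMvPolynomial (polyLaplacian σ R P) := by
        simp [hrows, polyLaplacian_apply, apply_ite C]

end Laplacian

/-- The space of harmonic homogeneous polynomials of degree `ℓ` in `d` variables, whose restrictions
to the sphere are the spherical harmonics. -/
def harmonicPolys (d ℓ : ℕ) : Submodule ℂ (MvPolynomial (Fin d) ℂ) :=
  MvPolynomial.homogeneousSubmodule (Fin d) ℂ ℓ ⊓ (polyLaplacian (Fin d) ℂ).ker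

lemma mem_harmonicPolys {d ℓ : ℕ} {P : MvPolynomial (Fin d) ℂ} :
    P ∈ harmonicPolys d ℓ ↔ IsHarmonicHomogeneous d ℓ P := by
  simp [harmonicPolys, IsHarmonicHomogeneous, polyLaplacian_apply]

instance (d ℓ : ℕ) : FiniteDimensional ℂ (harmonicPolys d ℓ) :=
  have : FiniteDimensional ℂ (MvPolynomial.homogeneousSubmodule (Fin d) ℂ ℓ) :=
    Module.Finite.iff_fg.2 (MvPolynomial.homogeneousSubmodule_fg (Fin d) ℂ ℓ)
  Submodule.finiteDimensional_of_le inf_le_left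

lemma bind₁_toMvPolynomial_mem_harmonicPolys {d ℓ : ℕ} {M : Matrix (Fin d) (Fin d) ℂ}
    (hM : M * M.transpose = 1) {P : MvPolynomial (Fin d) ℂ} (hP : P ∈ harmonicPolys d ℓ) :
    MvPolynomial.bind₁ M.toMvPolynomial P ∈ harmonicPolys d ℓ := by
  refine ⟨?_, ?_⟩
  · have := MvPolynomial.IsHomogeneous.aeval hP.1 _ M.toMvPolynomial_isHomogeneous
    rwa [one_mul] at this
  · rw [SetLike.mem_coe, LinearMap.mem_ker, polyLaplacian_bind₁_toMvPolynomial hM, hP.2, map_zero]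

/-- Restriction of complex polynomials on `ℝ^d` to the unit sphere, with values in continuous
functions so that the result embeds in `L²`. -/
def sphereEval (d : ℕ) :
    MvPolynomial (Fin d) ℂ →ₐ[ℂ] C(Metric.sphere (0 : Euc d) 1, ℂ) :=
  MvPolynomial.aeval fun i => ⟨fun x => ((x : Euc d) i : ℂ), by fun_prop⟩

lemma sphereEval_apply (d : ℕ) (P : MvPolynomial (Fin d) ℂ) (x : Metric.sphere (0 : Euc d) 1) :
    sphereEval d P x = MvPolynomial.aeval (fun i => ((x : Euc d) i : ℂ)) P :=
  MvPolynomial.comp_aeval_apply _ (ContinuousMap.evalAlgHom ℂ ℂ x) P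

/-- The matrix of a linear isometry of `ℝ^d` in the standard basis, with complex entries so that it
acts on complex polynomials by substitution. -/
def isometryMatrix {d : ℕ} (A : Euc d ≃ₗᵢ[ℝ] Euc d) : Matrix (Fin d) (Fin d) ℂ :=
  (LinearMap.toMatrix (EuclideanSpace.basisFun (Fin d) ℝ).toBasis
    (EuclideanSpace.basisFun (Fin d) ℝ).toBasis A.toLinearEquiv).map Complex.ofRealHom

lemma isometryMatrix_mul_transpose {d : ℕ} (A : Euc d ≃ₗᵢ[ℝ] Euc d) :
    isometryMatrix A * (isometryMatrix A).transpose = 1 := by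
  have horth := (Matrix.mem_orthogonalGroup_iff (Fin d) ℝ).1 (A.toMatrix_mem_unitaryGroup
    (EuclideanSpace.basisFun (Fin d) ℝ) (EuclideanSpace.basisFun (Fin d) ℝ))
  rw [isometryMatrix, ← Matrix.transpose_map, ← Matrix.map_mul, horth]
  simp

lemma isometryMatrix_mulVec {d : ℕ} (A : Euc d ≃ₗᵢ[ℝ] Euc d) (x : Euc d) (i : Fin d) :
    (isometryMatrix A).mulVec (fun j => (x j : ℂ)) i = A x i := by
  have hreal := congrFun (LinearMap.toMatrix_mulVec_repr (EuclideanSpace.basisFun (Fin d) ℝ).toBasis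
    (EuclideanSpace.basisFun (Fin d) ℝ).toBasis A.toLinearEquiv.toLinearMap x) i
  exact (RingHom.map_mulVec Complex.ofRealHom _ x.ofLp i).symm.trans
    (congrArg Complex.ofRealHom hreal)

lemma aeval_toMvPolynomial_isometryMatrix {d : ℕ} (A : Euc d ≃ₗᵢ[ℝ] Euc d) (x : Euc d)
    (i : Fin d) :
    MvPolynomial.aeval (fun j => (x j : ℂ)) ((isometryMatrix A).toMvPolynomial i) = A x i := by
  rw [MvPolynomial.aeval_eq_eval, Matrix.toMvPolynomial_eval_eq_apply, isometryMatrix_mulVec]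

lemma sphereEval_comp_smul {d : ℕ} (A : Euc d ≃ₗᵢ[ℝ] Euc d) (P : MvPolynomial (Fin d) ℂ) :
    (sphereEval d P).comp ⟨(A • ·), continuous_const_smul A⟩ =
      sphereEval d (MvPolynomial.bind₁ (isometryMatrix A).toMvPolynomial P) := by
  ext x
  simp only [ContinuousMap.comp_apply, ContinuousMap.coe_mk, sphereEval_apply,
    MvPolynomial.aeval_bind₁, coe_linearIsometryEquiv_smul, aeval_toMvPolynomial_isometryMatrix]

/-- The space of spherical harmonics of degree `ℓ`, as a subspace of `C(S^{d-1}, ℂ)` rather than of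
all functions on the sphere as in `sphericalHarmonics`. -/
def contHarmonics (d ℓ : ℕ) : Submodule ℂ C(Metric.sphere (0 : Euc d) 1, ℂ) :=
  (harmonicPolys d ℓ).map (sphereEval d).toLinearMap

instance (d ℓ : ℕ) : FiniteDimensional ℂ (contHarmonics d ℓ) :=
  inferInstanceAs (FiniteDimensional ℂ ((harmonicPolys d ℓ).map (sphereEval d).toLinearMap))

lemma comp_smul_mem_contHarmonics {d ℓ : ℕ} (A : Euc d ≃ₗᵢ[ℝ] Euc d)
    (f : C(Metric.sphere (0 : Euc d) 1, ℂ)) (hf : f ∈ contHarmonics d ℓ) :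
    f.comp ⟨(A • ·), continuous_const_smul A⟩ ∈ contHarmonics d ℓ := by
  obtain ⟨P, hP, rfl⟩ := hf
  exact ⟨_, bind₁_toMvPolynomial_mem_harmonicPolys (isometryMatrix_mul_transpose A) hP,
    (sphereEval_comp_smul A P).symm⟩

lemma map_coeFn_contHarmonics (d ℓ : ℕ) :
    (contHarmonics d ℓ).map (ContinuousMap.coeFnLinearMap ℂ) = sphericalHarmonics d ℓ := by
  rw [← Submodule.span_eq ((contHarmonics d ℓ).map _), sphericalHarmonics]
  congr 1
  ext f
  constructor
  · rintro ⟨_, ⟨P, hP, rfl⟩, rfl⟩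
    exact ⟨P, mem_harmonicPolys.1 hP, sphereEval_apply d P⟩
  · rintro ⟨P, hP, hf⟩
    exact ⟨sphereEval d P, ⟨P, mem_harmonicPolys.2 hP, rfl⟩,
      funext fun x => (sphereEval_apply d P x).trans (hf x).symm⟩

lemma finrank_contHarmonics (d ℓ : ℕ) :
    Module.finrank ℂ (contHarmonics d ℓ) = sphericalHarmonicsDim d ℓ := by
  rw [sphericalHarmonicsDim, ← map_coeFn_contHarmonics]
  exact (Submodule.equivMapOfInjective _ DFunLike.coe_injective _).finrank_eq

lemma norm_sphericalHarmonic_le {d ℓ : ℕ} {P : MvPolynomial (Fin d) ℂ}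
    (hP : IsHarmonicHomogeneous d ℓ P) {f : Euc d → ℂ}
    (hf : ∀ x : Euc d, f x = MvPolynomial.aeval (fun i => ((x i : ℝ) : ℂ)) P)
    (hnorm : (∫ x in Metric.sphere (0 : Euc d) 1, ‖f x‖ ^ 2 ∂μH[(d : ℝ) - 1]) = 1)
    {x : Euc d} (hx : ‖x‖ = 1) :
    ‖f x‖ ≤ Real.sqrt ((sphericalHarmonicsDim d ℓ : ℝ) /
      (μH[(d : ℝ) - 1] (Metric.sphere (0 : Euc d) 1)).toReal) := by
  have hd : 0 ≤ (d : ℝ) - 1 := by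
    rw [sub_nonneg, Nat.one_le_cast, Nat.one_le_iff_ne_zero]
    rintro rfl
    simp [Subsingleton.elim x 0] at hx
  have hf' (z : Metric.sphere (0 : Euc d) 1) : sphereEval d P z = f z := by
    rw [sphereEval_apply, hf]
  have : IsFiniteMeasure (μH[(d : ℝ) - 1] : Measure (Metric.sphere (0 : Euc d) 1)) := by
    simpa using isFiniteMeasure_hausdorffMeasure_sphere (E := Euc d)
  have hbound := norm_sq_apply_mul_measure_univ_le (μ := μH[(d : ℝ) - 1])
    (G := Euc d ≃ₗᵢ[ℝ] Euc d) comp_smul_mem_contHarmonics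
    (f := sphereEval d P) ⟨P, mem_harmonicPolys.2 hP, rfl⟩ ⟨x, by simpa using hx⟩
  simp only [hf', finrank_contHarmonics, Measure.real, hausdorffMeasure_subtype_univ _ hd,
    integral_subtype_hausdorffMeasure Metric.isClosed_sphere.measurableSet hd (‖f ·‖ ^ 2),
    hnorm, mul_one] at hbound
  have hpos : 0 < (μH[(d : ℝ) - 1] (Metric.sphere (0 : Euc d) 1)).toReal := by
    refine ENNReal.toReal_pos (fun hzero => ?_) ?_
    · rw [setIntegral_measure_zero _ hzero] at hnorm
      exact zero_ne_one hnorm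
    · exact hausdorffMeasure_subtype_univ (Metric.sphere (0 : Euc d) 1) hd ▸ measure_ne_top _ _
  exact Real.le_sqrt_of_sq_le ((le_div_iff₀ hpos).2 hbound)

/-- For an `L²(S^{d-1},σ)`-normalized spherical harmonic `f` of degree
`ℓ`, the Zernike basis function `ψ(x) = R_{ℓ,k}(‖x‖) f(x/‖x‖)` satisfies the uniform
bound `|ψ(x)| ≤ |C_{ℓ,k}| √(N_ℓ/σ(S^{d-1}))` for `0 < ‖x‖ ≤ 1`. -/
theorem zernike_basis_uniform_bound (d ℓ k : ℕ) (hd : 2 ≤ d)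
    (P : MvPolynomial (Fin d) ℂ) (hP : IsHarmonicHomogeneous d ℓ P)
    (f : Euc d → ℂ)
    (hf : ∀ x : Euc d, f x = MvPolynomial.aeval (fun i => ((x i : ℝ) : ℂ)) P)
    (hnorm : (∫ x in Metric.sphere (0 : Euc d) 1, ‖f x‖ ^ 2 ∂μH[(d : ℝ) - 1]) = 1)
    (ψ : Euc d → ℂ)
    (hψ : ∀ x : Euc d, x ≠ 0 → ψ x = (zernikeR d ℓ k ‖x‖ : ℂ) * f (‖x‖⁻¹ • x)) :
    ∀ x : Euc d, 0 < ‖x‖ → ‖x‖ ≤ 1 →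
      ‖ψ x‖ ≤
        (Real.sqrt (2 * ℓ + 4 * k + d) * ((k.factorial : ℝ))⁻¹ *
            ∏ j ∈ Finset.Icc 1 k, ((ℓ : ℝ) + k - j + d / 2)) *
          Real.sqrt ((sphericalHarmonicsDim d ℓ : ℝ) /
            (μH[(d : ℝ) - 1] (Metric.sphere (0 : Euc d) 1)).toReal) := by
  intro x hx0 hx1
  have hradial := abs_zernikeR_le (by omega : 2 ≤ 2 * ℓ + d) k ⟨hx0.le, hx1⟩
  have hunit : ‖‖x‖⁻¹ • x‖ = 1 := norm_smul_inv_norm (𝕜 := ℝ) (norm_pos_iff.1 hx0)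
  rw [hψ x (norm_pos_iff.1 hx0), norm_mul, Complex.norm_real, Real.norm_eq_abs]
  exact mul_le_mul hradial (norm_sphericalHarmonic_le hP hf hnorm hunit) (norm_nonneg _)
    ((abs_nonneg _).trans hradial)
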